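/- For all ε > 0 and Δ > 0, V* = inf_{μ ∈ ⋃_{i≥1} 𝒫_i^{(b)}} V(μ); that is, in minimizing the expected ℓ¹ cost one may restrict to measures whose monotone layer-constant density sequence decays geometrically with ratio e^{−ε} per period i, i.e. a_k = e^ε · a_{k+i} for all k ∈ ℕ. (Lemma 5.) -/

import Mathlib

open MeasureTheory Real Filter
open scoped ENNReal Topology

noncomputable section

/-- The ℓ¹ norm on ℝ². -/
def l1 (x : ℝ × ℝ) : ℝ := |x.1| + |x.2|

/-- The ε-differential-privacy constraint on a measure on ℝ² with sensitivity Δ. -/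
def DPC (ε Δ : ℝ) (μ : Measure (ℝ × ℝ)) : Prop :=
  ∀ S : Set (ℝ × ℝ), MeasurableSet S → ∀ t : ℝ × ℝ, l1 t ≤ Δ →
    μ S ≤ ENNReal.ofReal (Real.exp ε) * μ ((· + t) '' S)

/-- Expected ℓ¹ cost of a noise distribution. -/
def cost (μ : Measure (ℝ × ℝ)) : ℝ≥0∞ := ∫⁻ x, ENNReal.ofReal (l1 x) ∂μ

/-- The index k of the ℓ¹ layer A_i(k) = {x : kΔ/i ≤ ‖x‖₁ < (k+1)Δ/i} containing x. -/
def layerIdx (Δ : ℝ) (i : ℕ) (x : ℝ × ℝ) : ℕ := ⌊l1 x * i / Δ⌋₊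

/-- μ has a density w.r.t. Lebesgue measure which is constant on each ℓ¹ layer
A_i(k), with constant value a_k on A_i(k); (a_k) is the density sequence of μ. -/
def HasDensitySeq (Δ : ℝ) (i : ℕ) (μ : Measure (ℝ × ℝ)) (a : ℕ → ℝ≥0∞) : Prop :=
  μ = MeasureTheory.volume.withDensity (fun x => a (layerIdx Δ i x))

/-- Membership in 𝒫: probability measures satisfying the ε-DP constraint. -/
def MemP (ε Δ : ℝ) (μ : Measure (ℝ × ℝ)) : Prop :=
  IsProbabilityMeasure μ ∧ DPC ε Δ μ

/-- Membership in 𝒫_{i,sym}: members of 𝒫 with layer-constant density. -/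
def MemPsym (ε Δ : ℝ) (i : ℕ) (μ : Measure (ℝ × ℝ)) : Prop :=
  MemP ε Δ μ ∧ ∃ a : ℕ → ℝ≥0∞, HasDensitySeq Δ i μ a

/-- Membership in 𝒫_i^{(a)}: layer-constant density with nonincreasing density sequence. -/
def MemPa (ε Δ : ℝ) (i : ℕ) (μ : Measure (ℝ × ℝ)) : Prop :=
  MemP ε Δ μ ∧ ∃ a : ℕ → ℝ≥0∞, HasDensitySeq Δ i μ a ∧ Antitone a

/-- Membership in 𝒫_i^{(b)}: additionally the density sequence decays geometrically,
a_k = e^ε · a_{k+i} for all k. -/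
def MemPb (ε Δ : ℝ) (i : ℕ) (μ : Measure (ℝ × ℝ)) : Prop :=
  MemP ε Δ μ ∧ ∃ a : ℕ → ℝ≥0∞, HasDensitySeq Δ i μ a ∧ Antitone a ∧
    ∀ k : ℕ, a k = ENNReal.ofReal (Real.exp ε) * a (k + i)

/-- Membership in 𝒫_i^{(c)}: additionally a₀ = e^ε · a_{i−1} and
a₀ = a₁ = ⋯ = a_k for some 0 ≤ k ≤ i−2. -/
def MemPc (ε Δ : ℝ) (i : ℕ) (μ : Measure (ℝ × ℝ)) : Prop :=
  MemP ε Δ μ ∧ ∃ a : ℕ → ℝ≥0∞, HasDensitySeq Δ i μ a ∧ Antitone a ∧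
    (∀ k : ℕ, a k = ENNReal.ofReal (Real.exp ε) * a (k + i)) ∧
    a 0 = ENNReal.ofReal (Real.exp ε) * a (i - 1) ∧
    ∃ k : ℕ, k ≤ i - 2 ∧ ∀ j : ℕ, j ≤ k → a j = a 0

/-- Membership in 𝒫_i^{(d)}: members of 𝒫_i^{(c)} whose density sequence takes only
the two values a₀ and a_{i−1} on each period: for some 1 ≤ k ≤ i−2, a_j = a₀ for
0 ≤ j < k and a_j = a_{i−1} for k < j ≤ i−1. -/
def MemPd (ε Δ : ℝ) (i : ℕ) (μ : Measure (ℝ × ℝ)) : Prop :=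
  MemP ε Δ μ ∧ ∃ a : ℕ → ℝ≥0∞, HasDensitySeq Δ i μ a ∧ Antitone a ∧
    (∀ k : ℕ, a k = ENNReal.ofReal (Real.exp ε) * a (k + i)) ∧
    a 0 = ENNReal.ofReal (Real.exp ε) * a (i - 1) ∧
    (∃ k : ℕ, k ≤ i - 2 ∧ ∀ j : ℕ, j ≤ k → a j = a 0) ∧
    ∃ k : ℕ, 1 ≤ k ∧ k ≤ i - 2 ∧ (∀ j : ℕ, j < k → a j = a 0) ∧
      ∀ j : ℕ, k < j → j ≤ i - 1 → a j = a (i - 1)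

lemma polarE {E : Type*} [NormedAddCommGroup E] [NormedSpace ℝ E] [MeasurableSpace E]
    [BorelSpace E] [FiniteDimensional ℝ E] [Nontrivial E] (μ : Measure E) [μ.IsAddHaarMeasure]
    (F : E → ℝ≥0∞) (hF : Measurable F) :
    ∫⁻ x, F x ∂μ = ∫⁻ r, ∫⁻ θ, F ((r : ℝ) • (θ : E)) ∂μ.toSphere
      ∂(Measure.volumeIoiPow (Module.finrank ℝ E - 1)) := by
  have h1 : ∫⁻ x, F x ∂μ = ∫⁻ x : ({(0)}ᶜ : Set E), F x.1 ∂(μ.comap (↑)) := by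
    rw [lintegral_subtype_comap (measurableSet_singleton _).compl F,
      restrict_compl_singleton]
  have h2 := μ.measurePreserving_homeomorphUnitSphereProd.lintegral_comp_emb
        (Homeomorph.measurableEmbedding _)
        (fun p => F ((p.2 : ℝ) • (p.1 : E)))
  rw [h1]
  have h3 : ∀ x : ({(0)}ᶜ : Set E), F x.1 =
      F ((((homeomorphUnitSphereProd E x).2 : ℝ)) • ((homeomorphUnitSphereProd E x).1 : E)) := by
    intro x
    have hx : ‖(x : E)‖ ≠ 0 := norm_ne_zero_iff.mpr x.2
    simp [smul_smul, hx]
  simp_rw [h3]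
  rw [h2, lintegral_prod_symm']
  exact hF.comp (by fun_prop)

lemma measurable_l1 : Measurable l1 := by unfold l1; fun_prop

lemma l1_smul (r : ℝ) (x : ℝ × ℝ) : l1 (r • x) = |r| * l1 x := by
  simp [l1, abs_mul]; ring

lemma l1_nonneg (x : ℝ × ℝ) : 0 ≤ l1 x := by unfold l1; positivity

lemma l1_add (x y : ℝ × ℝ) : l1 (x + y) ≤ l1 x + l1 y := by
  simp only [l1, Prod.fst_add, Prod.snd_add]
  linarith [abs_add_le x.1 y.1, abs_add_le x.2 y.2]

lemma polar2 : ∃ P : Measure (ℝ × ℝ), IsProbabilityMeasure P ∧ (∀ᵐ θ ∂P, l1 θ = 1) ∧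
    ∀ (φ : ℝ → ℝ≥0∞) (f : ℝ × ℝ → ℝ≥0∞), Measurable φ → Measurable f →
      ∫⁻ x, φ (l1 x) * f x = ∫⁻ x, φ (l1 x) * ∫⁻ θ, f (l1 x • θ) ∂P := by
  let e := (WithLp.prodContinuousLinearEquiv 1 ℝ ℝ ℝ)
  let ν : Measure (WithLp 1 (ℝ × ℝ)) := (volume : Measure (ℝ × ℝ)).map e.symm
  have : ν.IsAddHaarMeasure := e.symm.isAddHaarMeasure_map _
  have : Nontrivial (WithLp 1 (ℝ × ℝ)) := e.toEquiv.nontrivial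
  have hl : ∀ y, l1 (e y) = ‖y‖ := by
    intro y; rw [WithLp.prod_norm_eq_of_L1]; rfl
  have me : Measurable e := e.continuous.measurable
  have mes : Measurable e.symm := e.symm.continuous.measurable
  have key : ∀ F : ℝ × ℝ → ℝ≥0∞, Measurable F → ∫⁻ x, F x =
      ∫⁻ r, ∫⁻ θ, F ((r : ℝ) • e (θ : WithLp 1 (ℝ × ℝ))) ∂ν.toSphere
      ∂(Measure.volumeIoiPow (Module.finrank ℝ (WithLp 1 (ℝ × ℝ)) - 1)) := by
    intro F hF
    have := polarE ν (fun y => F (e y)) (hF.comp me)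
    rw [show ∫⁻ y, F (e y) ∂ν = _ from lintegral_map (hF.comp me) mes] at this
    simpa using this
  set σ := ν.toSphere
  have hσ0 : σ Set.univ ≠ 0 := by
    rw [Measure.measure_univ_ne_zero]; exact ν.toSphere_ne_zero
  have hσt : σ Set.univ ≠ ⊤ := measure_ne_top _ _
  let j : Metric.sphere (0 : WithLp 1 (ℝ × ℝ)) 1 → ℝ × ℝ := fun θ => e (θ : WithLp 1 (ℝ × ℝ))
  have mi : Measurable j :=
    me.comp measurable_subtype_coe
  refine ⟨(σ Set.univ)⁻¹ • σ.map j, ⟨?_⟩, ?_, ?_⟩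
  · rw [Measure.smul_apply, Measure.map_apply mi MeasurableSet.univ]
    simpa using ENNReal.inv_mul_cancel hσ0 hσt
  · apply Measure.ae_smul_measure
    rw [ae_map_iff (p := fun x => l1 x = 1) mi.aemeasurable (measurable_l1 (measurableSet_singleton 1))]
    refine Eventually.of_forall fun θ => ?_
    show l1 (e θ) = 1
    rw [hl]; simpa using θ.2
  · intro φ f hφ hf
    have hPi : ∀ r : ℝ, ∫⁻ θ, f (r • θ) ∂((σ Set.univ)⁻¹ • σ.map j) =
        (σ Set.univ)⁻¹ * ∫⁻ θ, f (r • j θ) ∂σ := by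
      intro r
      rw [lintegral_smul_measure, lintegral_map (f := fun θ => f (r • θ)) (hf.comp (measurable_const_smul r)) mi]; rfl
    simp_rw [hPi]
    have mg : Measurable fun r : ℝ => ∫⁻ θ, f (r • j θ) ∂σ := by
      refine Measurable.lintegral_prod_right' (f := fun p : ℝ × Metric.sphere (0 : WithLp 1 (ℝ × ℝ)) 1 => f (p.1 • j p.2)) ?_
      exact hf.comp (measurable_fst.smul (mi.comp measurable_snd))
    rw [key (fun x => φ (l1 x) * f x) ((hφ.comp measurable_l1).mul hf),
      key (fun x => φ (l1 x) * ((σ Set.univ)⁻¹ * ∫⁻ θ, f (l1 x • j θ) ∂σ))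
        ((hφ.comp measurable_l1).mul ((mg.comp measurable_l1).const_mul _))]
    refine lintegral_congr fun r => ?_
    have hr : ∀ θ : Metric.sphere (0 : WithLp 1 (ℝ × ℝ)) 1, l1 ((r : ℝ) • j θ) = r := by
      intro θ
      rw [l1_smul, show l1 (j θ) = _ from hl θ, abs_of_pos r.2]
      have : ‖(θ : WithLp 1 (ℝ × ℝ))‖ = 1 := by simpa using θ.2
      rw [this, mul_one]
    change ∫⁻ θ, φ (l1 ((r : ℝ) • j θ)) * f ((r : ℝ) • j θ) ∂σ =
      ∫⁻ θ, φ (l1 ((r : ℝ) • j θ)) * ((σ Set.univ)⁻¹ * ∫⁻ θ', f (l1 ((r : ℝ) • j θ) • j θ') ∂σ) ∂σ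
    simp_rw [hr]
    rw [lintegral_const, lintegral_const_mul]
    · rw [mul_assoc, mul_comm _ (σ Set.univ), ← mul_assoc (σ Set.univ), ENNReal.mul_inv_cancel hσ0 hσt, one_mul]
    · exact hf.comp (mi.const_smul (r : ℝ))

lemma continuous_l1 : Continuous l1 := by unfold l1; fun_prop

lemma l1_neg (x : ℝ × ℝ) : l1 (-x) = l1 x := by simp [l1]

lemma exists_profile (ε D η : ℝ) (hη : 0 < η) (μ : Measure (ℝ × ℝ))
    (hμ : IsProbabilityMeasure μ) (hD : DPC ε D μ) :
    ∃ g : ℝ → ℝ≥0∞, Measurable g ∧ (∀ r, g r ≠ ⊤) ∧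
      (∀ r r', |r - r'| ≤ D → g r ≤ ENNReal.ofReal (Real.exp ε) * g r') ∧
      ∫⁻ x, g (l1 x) = 1 ∧
      ∫⁻ x, ENNReal.ofReal (l1 x) * g (l1 x) ≤ cost μ + ENNReal.ofReal η := by
  obtain ⟨P, hP, hP1, hpol⟩ := polar2
  set V : ℝ≥0∞ := volume {x : ℝ × ℝ | l1 x < η} with hV
  have hV0 : V ≠ 0 := by
    refine (IsOpen.measure_pos volume (isOpen_lt continuous_l1 continuous_const) ⟨0, ?_⟩).ne'
    simpa [l1] using hη
  have hVt : V ≠ ⊤ := by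
    refine ((measure_mono ?_).trans_lt (measure_ball_lt_top (x := (0 : ℝ × ℝ)) (r := η))).ne
    intro x hx
    simp only [Set.mem_ofPred_eq, l1] at hx
    rw [mem_ball_zero_iff, Prod.norm_def, max_lt_iff]
    simp only [Real.norm_eq_abs]
    exact ⟨by linarith [abs_nonneg x.2], by linarith [abs_nonneg x.1]⟩
  set T : Set ((ℝ × ℝ) × (ℝ × ℝ)) := {p | l1 (p.2 - p.1) < η} with hT
  have mT : MeasurableSet T :=
    measurableSet_lt (measurable_l1.comp (measurable_snd.sub measurable_fst)) measurable_const
  set J : (ℝ × ℝ) × (ℝ × ℝ) → ℝ≥0∞ := T.indicator 1 with hJ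
  have mJ : Measurable J := measurable_one.indicator mT
  have mJ1 : ∀ x, Measurable (fun y => J (x, y)) := fun x => mJ.comp measurable_prodMk_left
  have mJ2 : ∀ y, Measurable (fun x => J (x, y)) := fun y => mJ.comp measurable_prodMk_right
  have mL : Measurable (fun x : ℝ × ℝ => ENNReal.ofReal (l1 x)) :=
    ENNReal.measurable_ofReal.comp measurable_l1
  set f : ℝ × ℝ → ℝ≥0∞ := fun x => V⁻¹ * μ (Prod.mk x ⁻¹' T) with hf
  have mf : Measurable f := (measurable_measure_prodMk_left mT).const_mul _
  have hfle : ∀ x, f x ≤ V⁻¹ := fun x => by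
    calc V⁻¹ * μ (Prod.mk x ⁻¹' T) ≤ V⁻¹ * 1 := by gcongr; exact prob_le_one
      _ = V⁻¹ := mul_one _
  have hfD : ∀ x y, l1 (y - x) ≤ D → f x ≤ ENNReal.ofReal (Real.exp ε) * f y := by
    intro x y hxy
    have h := hD (Prod.mk x ⁻¹' T) (measurable_prodMk_left mT) (y - x) hxy
    have : (· + (y - x)) '' (Prod.mk x ⁻¹' T) = Prod.mk y ⁻¹' T := by
      ext z
      simp only [Set.image_add_right, Set.mem_preimage, hT, Set.mem_ofPred_eq]
      rw [show z + -(y - x) - x = z - y by abel]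
    rw [this] at h
    calc f x ≤ V⁻¹ * (ENNReal.ofReal (Real.exp ε) * μ (Prod.mk y ⁻¹' T)) := by
          simp only [hf]; gcongr
      _ = _ := by simp only [hf]; ring
  -- Tonelli
  have hton : ∀ φ : ℝ × ℝ → ℝ≥0∞, Measurable φ →
      ∫⁻ x, φ x * f x = V⁻¹ * ∫⁻ y, ∫⁻ x, φ x * J (x, y) ∂volume ∂μ := by
    intro φ hφ
    have h1 : ∀ x, φ x * f x = V⁻¹ * ∫⁻ y, φ x * J (x, y) ∂μ := by
      intro x
      rw [lintegral_const_mul _ (mJ1 x)]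
      have : ∫⁻ y, J (x, y) ∂μ = μ (Prod.mk x ⁻¹' T) := by
        rw [← lintegral_indicator_one (measurable_prodMk_left mT)]
        rfl
      rw [this]; simp only [hf]; ring
    have m2 : Measurable (fun p : (ℝ × ℝ) × (ℝ × ℝ) => φ p.1 * J p) :=
      (hφ.comp measurable_fst).mul mJ
    simp_rw [h1]
    rw [lintegral_const_mul _ m2.lintegral_prod_right',
      lintegral_lintegral_swap (f := fun x y => φ x * J (x, y)) m2.aemeasurable]
  have hsec : ∀ y, ∫⁻ x, J (x, y) = V := by
    intro y
    have : ∫⁻ x, J (x, y) = volume ((fun x => (x, y)) ⁻¹' T) := by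
      rw [← lintegral_indicator_one (measurable_prodMk_right mT)]
      rfl
    rw [this, hV, ← measure_preimage_add_right volume (-y) {x : ℝ × ℝ | l1 x < η}]
    congr 1
    ext x
    simp only [hT, Set.mem_preimage, Set.mem_ofPred_eq]
    rw [← l1_neg (x + -y), neg_add, neg_neg, neg_add_eq_sub]
  set g : ℝ → ℝ≥0∞ := fun r => ∫⁻ θ, f (r • θ) ∂P with hg
  have mg : Measurable g :=
    Measurable.lintegral_prod_right' (f := fun p : ℝ × (ℝ × ℝ) => f (p.1 • p.2))
      (mf.comp (measurable_fst.smul measurable_snd))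
  refine ⟨g, mg, ?_, ?_, ?_, ?_⟩
  · intro r
    refine ((lintegral_mono fun θ => hfle _).trans_lt ?_).ne
    simp only [lintegral_const, measure_univ, mul_one]
    exact ENNReal.inv_lt_top.mpr (pos_iff_ne_zero.mpr hV0)
  · intro r r' h
    rw [hg]
    simp only
    rw [← lintegral_const_mul (f := fun θ => f (r' • θ)) _ (mf.comp (measurable_const_smul r'))]
    refine lintegral_mono_ae ?_
    filter_upwards [hP1] with θ hθ
    apply hfD
    rw [← sub_smul, l1_smul, hθ, mul_one, abs_sub_comm]
    exact h
  · have := hpol (fun _ => 1) f measurable_const mf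
    simp only [one_mul] at this
    rw [hg]; simp only
    rw [← this]
    have h2 := hton (fun _ => 1) measurable_const
    simp only [one_mul] at h2
    rw [h2]
    simp_rw [hsec]
    simp [ENNReal.inv_mul_cancel hV0 hVt]
  · rw [hg]; simp only
    rw [← hpol (fun r => ENNReal.ofReal r) f ENNReal.measurable_ofReal mf,
      hton _ mL]
    have : ∀ y, ∫⁻ x, ENNReal.ofReal (l1 x) * J (x, y) ≤
        ENNReal.ofReal (l1 y + η) * V := by
      intro y
      rw [← hsec y, ← lintegral_const_mul _ (mJ2 y)]
      refine lintegral_mono fun x => ?_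
      by_cases hx : (x, y) ∈ T
      · have h1 : l1 (y - x) < η := hx
        have h2 := l1_add y (-(y - x))
        rw [l1_neg, show y + -(y - x) = x by abel] at h2
        gcongr
        linarith
      · simp [hJ, hx]
    calc V⁻¹ * ∫⁻ y, ∫⁻ x, ENNReal.ofReal (l1 x) * J (x, y) ∂volume ∂μ
        ≤ V⁻¹ * ∫⁻ y, ENNReal.ofReal (l1 y + η) * V ∂μ := by
          gcongr with y; exact this y
      _ = ∫⁻ y, ENNReal.ofReal (l1 y + η) ∂μ := by
          rw [lintegral_mul_const' _ _ hVt, mul_comm, mul_assoc, ENNReal.mul_inv_cancel hV0 hVt, mul_one]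
      _ = ∫⁻ y, ENNReal.ofReal (l1 y) + ENNReal.ofReal η ∂μ := by
          refine lintegral_congr fun y => ENNReal.ofReal_add (l1_nonneg y) hη.le
      _ = cost μ + ENNReal.ofReal η := by
          rw [lintegral_add_right _ measurable_const]; simp [cost]

lemma scale (ε Δ lam : ℝ) (hl : 0 < lam) (μ : Measure (ℝ × ℝ)) (h : MemP ε Δ μ) :
    MemP ε (lam * Δ) (μ.map (lam • ·)) ∧
      cost (μ.map (lam • ·)) = ENNReal.ofReal lam * cost μ := by
  obtain ⟨hp, hD⟩ := h
  have m : Measurable (fun x : ℝ × ℝ => lam • x) := measurable_const_smul lam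
  refine ⟨⟨Measure.isProbabilityMeasure_map m.aemeasurable, ?_⟩, ?_⟩
  · intro S hS t ht
    have mS : MeasurableSet ((· + t) '' S) := by
      rw [Set.image_add_right]; exact (measurable_add_const _) hS
    rw [Measure.map_apply m hS, Measure.map_apply m mS]
    have h1 := hD _ (m hS) (lam⁻¹ • t) (by
      rw [l1_smul, abs_of_pos (inv_pos.mpr hl)]
      rw [inv_mul_le_iff₀ hl]; exact ht)
    convert h1 using 3
    rw [Set.image_add_right, Set.image_add_right]
    ext x
    simp only [Set.mem_preimage]
    rw [smul_add, smul_neg, smul_smul, mul_inv_cancel₀ hl.ne', one_smul]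
  · unfold cost
    have mL : Measurable (fun x : ℝ × ℝ => ENNReal.ofReal (l1 x)) :=
      ENNReal.measurable_ofReal.comp measurable_l1
    rw [lintegral_map mL m, ← lintegral_const_mul _ mL]
    refine lintegral_congr fun x => ?_
    rw [l1_smul, abs_of_pos hl, ENNReal.ofReal_mul hl.le]

lemma vol_lt_top (v : ℝ) : volume {x : ℝ × ℝ | l1 x < v} < ⊤ := by
  refine (measure_mono ?_).trans_lt (measure_ball_lt_top (x := (0 : ℝ × ℝ)) (r := v))
  intro x hx
  simp only [Set.mem_ofPred_eq, l1] at hx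
  rw [mem_ball_zero_iff, Prod.norm_def, max_lt_iff]
  simp only [Real.norm_eq_abs]
  exact ⟨by linarith [abs_nonneg x.2], by linarith [abs_nonneg x.1]⟩

lemma chain (ε D : ℝ) (g : ℝ → ℝ≥0∞)
    (hg : ∀ r r', |r - r'| ≤ D → g r ≤ ENNReal.ofReal (Real.exp ε) * g r') (N : ℕ) :
    ∀ r r', |r - r'| ≤ N * D → g r ≤ ENNReal.ofReal (Real.exp (ε * N)) * g r' := by
  induction N with
  | zero =>
    intro r r' h
    have : r = r' := by
      have : |r - r'| ≤ 0 := by simpa using h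
      exact sub_eq_zero.mp (abs_nonpos_iff.mp this)
    simp [this]
  | succ N ih =>
    intro r r' h
    push_cast at h
    have hN : (0 : ℝ) < N + 1 := by positivity
    have hle : |r - r'| / (N + 1) ≤ D := by
      rw [div_le_iff₀ hN]; linarith
    have h1 : |r - (r + (r' - r) / (N + 1))| ≤ D := by
      rw [show r - (r + (r' - r) / (N + 1)) = (r - r') / (N + 1) by ring, abs_div, abs_of_pos hN]
      exact hle
    have h2 : |(r + (r' - r) / (N + 1)) - r'| ≤ N * D := by
      rw [show (r + (r' - r) / (N + 1)) - r' = N * ((r - r') / (N + 1)) by field_simp; ring, abs_mul,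
        abs_div, abs_of_pos hN, abs_of_nonneg (Nat.cast_nonneg N)]
      gcongr
    calc g r ≤ ENNReal.ofReal (Real.exp ε) * g (r + (r' - r) / (N + 1)) := hg _ _ h1
      _ ≤ ENNReal.ofReal (Real.exp ε) * (ENNReal.ofReal (Real.exp (ε * N)) * g r') := by
          gcongr; exact ih _ _ h2
      _ = _ := by
          rw [← mul_assoc, ← ENNReal.ofReal_mul (Real.exp_pos _).le, ← Real.exp_add]
          congr 3; push_cast; ring

/-- The geometric monotone density sequence built from a radial profile. -/
def aseq (ε Δ v : ℝ) (i : ℕ) (g : ℝ → ℝ≥0∞) (k : ℕ) : ℝ≥0∞ :=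
  ⨅ (n : ℤ) (r : ℝ) (_ : v ≤ r ∧ r + n * Δ < (k + 1) * Δ / i),
    ENNReal.ofReal (Real.exp (-ε * n)) * g r

lemma aseq_le (ε Δ v : ℝ) (i : ℕ) (g : ℝ → ℝ≥0∞) (k : ℕ) (n : ℤ) (r : ℝ) (h1 : v ≤ r)
    (h2 : r + n * Δ < (k + 1) * Δ / i) :
    aseq ε Δ v i g k ≤ ENNReal.ofReal (Real.exp (-ε * n)) * g r :=
  iInf_le_of_le n (iInf_le_of_le r (iInf_le_of_le ⟨h1, h2⟩ le_rfl))

lemma le_aseq (ε Δ v : ℝ) (i : ℕ) (g : ℝ → ℝ≥0∞) (k : ℕ) (b : ℝ≥0∞)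
    (h : ∀ (n : ℤ) (r : ℝ), v ≤ r → r + n * Δ < (k + 1) * Δ / i →
      b ≤ ENNReal.ofReal (Real.exp (-ε * n)) * g r) : b ≤ aseq ε Δ v i g k :=
  le_iInf fun n => le_iInf fun r => le_iInf fun hh => h n r hh.1 hh.2

lemma aseq_antitone (ε Δ v : ℝ) (hΔ : 0 < Δ) (i : ℕ) (g : ℝ → ℝ≥0∞) :
    Antitone (aseq ε Δ v i g) := by
  intro k l hkl
  refine le_aseq _ _ _ _ _ _ _ fun n r h1 h2 => aseq_le _ _ _ _ _ _ n r h1 (h2.trans_le ?_)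
  have : (k : ℝ) ≤ l := by exact_mod_cast hkl
  gcongr

lemma aseq_geom (ε Δ v : ℝ) (i : ℕ) (hi : 1 ≤ i) (g : ℝ → ℝ≥0∞) (k : ℕ) :
    aseq ε Δ v i g k = ENNReal.ofReal (Real.exp ε) * aseq ε Δ v i g (k + i) := by
  have hi' : (0 : ℝ) < i := by exact_mod_cast hi
  have e1 : ((k + i : ℕ) + 1 : ℝ) * Δ / i = (k + 1) * Δ / i + Δ := by
    push_cast; field_simp; ring
  have hA : ENNReal.ofReal (Real.exp (-ε)) * aseq ε Δ v i g k ≤ aseq ε Δ v i g (k + i) := by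
    refine le_aseq _ _ _ _ _ _ _ fun n r h1 h2 => ?_
    rw [e1] at h2
    have := aseq_le ε Δ v i g k (n - 1) r h1 (by push_cast; linarith)
    calc _ ≤ ENNReal.ofReal (Real.exp (-ε)) *
          (ENNReal.ofReal (Real.exp (-ε * ((n - 1 : ℤ) : ℝ))) * g r) := by gcongr
      _ = _ := by
          rw [← mul_assoc, ← ENNReal.ofReal_mul (Real.exp_pos _).le, ← Real.exp_add]
          congr 3; push_cast; ring
  apply le_antisymm
  · calc aseq ε Δ v i g k = ENNReal.ofReal (Real.exp ε) *
          (ENNReal.ofReal (Real.exp (-ε)) * aseq ε Δ v i g k) := by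
          rw [← mul_assoc, ← ENNReal.ofReal_mul (Real.exp_pos _).le, ← Real.exp_add]; simp
      _ ≤ _ := by gcongr
  · refine le_aseq _ _ _ _ _ _ _ fun n r h1 h2 => ?_
    have := aseq_le ε Δ v i g (k + i) (n + 1) r h1 (by rw [e1]; push_cast; linarith)
    calc _ ≤ ENNReal.ofReal (Real.exp ε) *
          (ENNReal.ofReal (Real.exp (-ε * ((n + 1 : ℤ) : ℝ))) * g r) := by gcongr
      _ = _ := by
          rw [← mul_assoc, ← ENNReal.ofReal_mul (Real.exp_pos _).le, ← Real.exp_add]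
          congr 3; push_cast; ring

lemma layer_bounds (Δ : ℝ) (hΔ : 0 < Δ) (i : ℕ) (hi : 1 ≤ i) (x : ℝ × ℝ) :
    (layerIdx Δ i x : ℝ) * Δ / i ≤ l1 x ∧ l1 x < (layerIdx Δ i x + 1) * Δ / i := by
  have hi' : (0 : ℝ) < i := by exact_mod_cast hi
  have h0 : 0 ≤ l1 x * i / Δ := by have := l1_nonneg x; positivity
  have h1 : (layerIdx Δ i x : ℝ) ≤ l1 x * i / Δ := Nat.floor_le h0
  have h2 : l1 x * i / Δ < layerIdx Δ i x + 1 := Nat.lt_floor_add_one _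
  rw [le_div_iff₀ hΔ] at h1
  rw [div_lt_iff₀ hΔ] at h2
  rw [div_le_iff₀ hi', lt_div_iff₀ hi']
  exact ⟨h1, h2⟩

lemma measurable_layer (Δ : ℝ) (i : ℕ) : Measurable (layerIdx Δ i) :=
  Nat.measurable_floor.comp ((measurable_l1.mul_const _).div_const _)

lemma dpc_of_geom (ε Δ : ℝ) (hΔ : 0 < Δ) (i : ℕ) (hi : 1 ≤ i) (a : ℕ → ℝ≥0∞)
    (ha : Antitone a) (hg : ∀ k, a k = ENNReal.ofReal (Real.exp ε) * a (k + i)) :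
    DPC ε Δ (volume.withDensity (fun x => a (layerIdx Δ i x))) := by
  have hi' : (0 : ℝ) < i := by exact_mod_cast hi
  intro S hS t ht
  have mS : MeasurableSet ((· + t) '' S) := by
    rw [Set.image_add_right]; exact (measurable_add_const _) hS
  have mh : Measurable (fun x => a (layerIdx Δ i x)) :=
    (measurable_from_top (f := a)).comp (measurable_layer Δ i)
  rw [withDensity_apply _ hS, withDensity_apply _ mS]
  have h1 : ∫⁻ x in ((· + t) '' S), a (layerIdx Δ i x) = ∫⁻ x in S, a (layerIdx Δ i (x + t)) := by
    have hp := (measurePreserving_add_right (volume : Measure (ℝ × ℝ)) t)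
    rw [← hp.setLIntegral_comp_preimage mS mh, Set.preimage_image_eq _ (add_left_injective t)]
  rw [h1, ← lintegral_const_mul (f := fun x => a (layerIdx Δ i (x + t))) _
    (mh.comp (measurable_add_const t))]
  refine lintegral_mono fun x => ?_
  simp only
  rw [hg (layerIdx Δ i x)]
  gcongr
  apply ha
  unfold layerIdx
  have h0 : 0 ≤ l1 x * i / Δ := by have := l1_nonneg x; positivity
  rw [← Nat.floor_add_natCast h0]
  apply Nat.floor_mono
  have := l1_add x t
  calc l1 (x + t) * i / Δ ≤ (l1 x + Δ) * i / Δ := by gcongr; linarith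
    _ = _ := by field_simp

lemma main_step (ε Δ v : ℝ) (hΔ : 0 < Δ) (i m : ℕ) (hi : 1 ≤ i) (hv : v = m * Δ / i)
    (g : ℝ → ℝ≥0∞) (mg : Measurable g) (gt : ∀ r, g r ≠ ⊤)
    (hg : ∀ r r', |r - r'| ≤ Δ + Δ / i → g r ≤ ENNReal.ofReal (Real.exp ε) * g r')
    (g1 : ∫⁻ x, g (l1 x) = 1)
    (gc : ∫⁻ x, ENNReal.ofReal (l1 x) * g (l1 x) < ENNReal.ofReal v) :
    ∃ ν, MemPb ε Δ i ν ∧ cost ν < ENNReal.ofReal v := by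
  have hi' : (0 : ℝ) < i := by exact_mod_cast hi
  have hv0 : 0 ≤ v := by rw [hv]; positivity
  set a := aseq ε Δ v i g with ha
  set h : ℝ × ℝ → ℝ≥0∞ := fun x => a (layerIdx Δ i x) with hh
  have mh : Measurable h := (measurable_from_top (f := a)).comp (measurable_layer Δ i)
  have anti : Antitone a := aseq_antitone ε Δ v hΔ i g
  have geom : ∀ k, a k = ENNReal.ofReal (Real.exp ε) * a (k + i) := aseq_geom ε Δ v i hi g
  have mgl : Measurable (fun x => g (l1 x)) := mg.comp measurable_l1
  have mL : Measurable (fun x : ℝ × ℝ => ENNReal.ofReal (l1 x)) :=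
    ENNReal.measurable_ofReal.comp measurable_l1
  have m1 : Measurable (fun x : ℝ × ℝ => ENNReal.ofReal (v - l1 x)) :=
    ENNReal.measurable_ofReal.comp (measurable_l1.const_sub v)
  have m2 : Measurable (fun x : ℝ × ℝ => ENNReal.ofReal (l1 x - v)) :=
    ENNReal.measurable_ofReal.comp (measurable_l1.sub_const v)
  have upper : ∀ x, v ≤ l1 x → h x ≤ g (l1 x) := by
    intro x hx
    have := aseq_le ε Δ v i g (layerIdx Δ i x) 0 (l1 x) hx
      (by simpa using (layer_bounds Δ hΔ i hi x).2)
    simpa using this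
  have lower : ∀ x, l1 x < v → g (l1 x) ≤ h x := by
    intro x hx
    refine le_aseq _ _ _ _ _ _ _ fun n r h1 h2 => ?_
    obtain ⟨b1, b2⟩ := layer_bounds Δ hΔ i hi x
    set k := layerIdx Δ i x
    have hkm : k < m := by
      have : (k : ℝ) * Δ / i < m * Δ / i := by rw [← hv]; linarith
      have := lt_of_mul_lt_mul_right ((div_lt_div_iff_of_pos_right hi').mp this) hΔ.le
      exact_mod_cast this
    have hkv : ((k : ℝ) + 1) * Δ / i ≤ v := by
      rw [hv]
      have : (k : ℝ) + 1 ≤ m := by exact_mod_cast hkm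
      gcongr
    have hn : n < 0 := by
      by_contra hcon
      have : (0 : ℝ) ≤ n := by exact_mod_cast not_lt.mp hcon
      have : 0 ≤ n * Δ := by positivity
      linarith
    obtain ⟨N, rfl⟩ : ∃ N : ℕ, n = -(N : ℤ) := ⟨(-n).toNat, by omega⟩
    have hN : (1 : ℝ) ≤ N := by exact_mod_cast (by omega : 1 ≤ N)
    have := chain ε (Δ + Δ / i) g hg N (l1 x) r (by
      rw [abs_sub_comm, abs_of_nonneg (by linarith)]
      push_cast at h2
      have e : ((k : ℝ) + 1) * Δ / i = k * Δ / i + Δ / i := by ring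
      have : Δ / i ≤ N * (Δ / i) := le_mul_of_one_le_left (by positivity) hN
      nlinarith)
    simpa using this
  have a0 : a 0 ≠ ⊤ := by
    obtain ⟨N, hN⟩ := exists_nat_gt (v / Δ)
    rw [div_lt_iff₀ hΔ] at hN
    have hpos : 0 < (((0 : ℕ) : ℝ) + 1) * Δ / i := by positivity
    have := aseq_le ε Δ v i g 0 (-(N : ℤ)) v le_rfl (by push_cast at hpos ⊢; linarith)
    exact (this.trans_lt (ENNReal.mul_lt_top ENNReal.ofReal_lt_top (gt v).lt_top)).ne
  set M := ∫⁻ x, h x with hM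
  set C := ∫⁻ x, ENNReal.ofReal (l1 x) * h x with hC
  set B : Set (ℝ × ℝ) := {x | l1 x < v} with hB
  have mB : MeasurableSet B := measurableSet_lt measurable_l1 measurable_const
  have hMt : M ≠ ⊤ := by
    have hle : ∀ x, h x ≤ a 0 * B.indicator 1 x + g (l1 x) := by
      intro x
      by_cases hx : l1 x < v
      · have : x ∈ B := hx
        simp only [this, Set.indicator_of_mem, Pi.one_apply, mul_one]
        exact (anti (Nat.zero_le _)).trans le_self_add
      · exact (upper x (not_lt.mp hx)).trans le_add_self
    refine ((lintegral_mono hle).trans_lt ?_).ne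
    rw [lintegral_add_right _ mgl, lintegral_const_mul _ (measurable_one.indicator mB),
      lintegral_indicator_one mB, g1]
    exact ENNReal.add_lt_top.mpr ⟨ENNReal.mul_lt_top a0.lt_top (vol_lt_top v), ENNReal.one_lt_top⟩
  -- the splitting identity
  have ident : ∀ f : ℝ × ℝ → ℝ≥0∞, Measurable f →
      (∫⁻ x, ENNReal.ofReal (l1 x - v) * f x) + ENNReal.ofReal v * ∫⁻ x, f x =
      (∫⁻ x, ENNReal.ofReal (l1 x) * f x) + ∫⁻ x, ENNReal.ofReal (v - l1 x) * f x := by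
    intro f mf
    have n2 : Measurable (fun x => ENNReal.ofReal (l1 x - v) * f x) := m2.mul mf
    have nL : Measurable (fun x => ENNReal.ofReal (l1 x) * f x) := mL.mul mf
    rw [← lintegral_const_mul _ mf, ← lintegral_add_left n2, ← lintegral_add_left nL]
    refine lintegral_congr fun x => ?_
    rw [← add_mul, ← add_mul]
    congr 1
    have hl := l1_nonneg x
    rcases le_total (l1 x) v with hx | hx
    · rw [ENNReal.ofReal_of_nonpos (by linarith : l1 x - v ≤ 0), zero_add,
        ← ENNReal.ofReal_add hl (by linarith)]
      congr 1; ring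
    · rw [ENNReal.ofReal_of_nonpos (by linarith : v - l1 x ≤ 0), add_zero,
        ← ENNReal.ofReal_add (by linarith) hv0]
      congr 1; ring
  have c1 : ∫⁻ x, ENNReal.ofReal (v - l1 x) * g (l1 x) ≤ ∫⁻ x, ENNReal.ofReal (v - l1 x) * h x := by
    refine lintegral_mono fun x => ?_
    by_cases hx : l1 x < v
    · simp only; gcongr; exact lower x hx
    · simp [ENNReal.ofReal_of_nonpos (by linarith : v - l1 x ≤ 0)]
  have c2 : ∫⁻ x, ENNReal.ofReal (l1 x - v) * h x ≤ ∫⁻ x, ENNReal.ofReal (l1 x - v) * g (l1 x) := by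
    refine lintegral_mono fun x => ?_
    by_cases hx : l1 x < v
    · simp [ENNReal.ofReal_of_nonpos (by linarith : l1 x - v ≤ 0)]
    · simp only; gcongr; exact upper x (not_lt.mp hx)
  have c3 : ∫⁻ x, ENNReal.ofReal (v - l1 x) * h x ≠ ⊤ := by
    have : ∫⁻ x, ENNReal.ofReal (v - l1 x) * h x ≤ ENNReal.ofReal v * M := by
      rw [hM, ← lintegral_const_mul _ mh]
      refine lintegral_mono fun x => ?_
      simp only; gcongr; linarith [l1_nonneg x]
    exact (this.trans_lt (ENNReal.mul_lt_top ENNReal.ofReal_lt_top hMt.lt_top)).ne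
  have i1 := ident _ mgl
  have i2 := ident h mh
  rw [g1, mul_one] at i1
  rw [← hM, ← hC] at i2
  set ag := ∫⁻ x, ENNReal.ofReal (v - l1 x) * g (l1 x)
  set bg := ∫⁻ x, ENNReal.ofReal (l1 x - v) * g (l1 x)
  set ah := ∫⁻ x, ENNReal.ofReal (v - l1 x) * h x
  set bh := ∫⁻ x, ENNReal.ofReal (l1 x - v) * h x
  set K := ∫⁻ x, ENNReal.ofReal (l1 x) * g (l1 x)
  have d1 : bg < ag := by
    by_contra hcon
    have hcon := not_lt.mp hcon
    have hlt : ag ≠ ⊤ := (c1.trans_lt c3.lt_top).ne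
    have : K + ag < bg + ENNReal.ofReal v := by
      rw [add_comm]
      calc ag + K < ag + ENNReal.ofReal v := by
            exact ENNReal.add_lt_add_left hlt gc
        _ ≤ _ := by gcongr
    exact absurd i1 this.ne'
  have d2 : bh < ah := c2.trans_lt (d1.trans_le c1)
  have d3 : C < ENNReal.ofReal v * M := by
    by_contra hcon
    have hcon := not_lt.mp hcon
    have hvM : ENNReal.ofReal v * M ≠ ⊤ := ENNReal.mul_ne_top ENNReal.ofReal_ne_top hMt
    have : bh + ENNReal.ofReal v * M < C + ah := by
      rw [add_comm]
      calc _ < ENNReal.ofReal v * M + ah := ENNReal.add_lt_add_left hvM d2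
        _ ≤ _ := by gcongr
    exact absurd i2 this.ne
  have hM0 : M ≠ 0 := by
    intro h0; rw [h0] at d3; simp at d3
  refine ⟨volume.withDensity (fun x => M⁻¹ * a (layerIdx Δ i x)), ⟨⟨⟨?_⟩, ?_⟩, fun k => M⁻¹ * a k, rfl, ?_, ?_⟩, ?_⟩
  · rw [withDensity_apply _ MeasurableSet.univ, Measure.restrict_univ, lintegral_const_mul _ mh]
    exact ENNReal.inv_mul_cancel hM0 hMt
  · refine dpc_of_geom ε Δ hΔ i hi (fun k => M⁻¹ * a k) ?_ ?_
    · intro k l hkl; change M⁻¹ * a l ≤ M⁻¹ * a k; gcongr; exact anti hkl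
    · intro k; change M⁻¹ * a k = _ * (M⁻¹ * a (k + i)); rw [geom k]; ring
  · intro k l hkl; change M⁻¹ * a l ≤ M⁻¹ * a k; gcongr; exact anti hkl
  · intro k; change M⁻¹ * a k = _ * (M⁻¹ * a (k + i)); rw [geom k]; ring
  · unfold cost
    rw [lintegral_withDensity_eq_lintegral_mul _ (mh.const_mul _) mL]
    have : ∀ x, ((fun x => M⁻¹ * h x) * fun x => ENNReal.ofReal (l1 x)) x =
        M⁻¹ * (ENNReal.ofReal (l1 x) * h x) := by
      intro x; simp only [Pi.mul_apply]; ring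
    change ∫⁻ x, ((fun x => M⁻¹ * h x) * fun x => ENNReal.ofReal (l1 x)) x < _
    simp_rw [this]
    rw [lintegral_const_mul (f := fun x => ENNReal.ofReal (l1 x) * h x) _ (mL.mul mh)]
    change M⁻¹ * C < _
    rw [mul_comm, ← div_eq_mul_inv]
    exact ENNReal.div_lt_of_lt_mul d3
/-- Lemma 5: the optimal cost V* equals the infimum over measures with
layer-constant, nonincreasing, geometrically decaying density sequences
(a_k = e^ε · a_{k+i} for all k). -/
theorem Vstar_eq_inf_Pb (ε Δ : ℝ) (hε : 0 < ε) (hΔ : 0 < Δ) :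
    (⨅ (μ : Measure (ℝ × ℝ)) (_ : MemP ε Δ μ), cost μ) =
    ⨅ (μ : Measure (ℝ × ℝ)) (_ : ∃ i : ℕ, 1 ≤ i ∧ MemPb ε Δ i μ), cost μ := by
  apply le_antisymm
  · refine le_iInf₂ fun μ h => ?_
    obtain ⟨i, _, h⟩ := h
    exact iInf₂_le μ h.1
  · refine le_iInf₂ fun μ hμ => ?_
    by_contra hcon
    have hcon := not_le.mp hcon
    obtain ⟨c1, hc10, hc1, hc1W⟩ := ENNReal.lt_iff_exists_real_btwn.mp hcon
    have hct : cost μ ≠ ⊤ := hcon.ne_top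
    set c := (cost μ).toReal with hc
    have hcc : cost μ = ENNReal.ofReal c := (ENNReal.ofReal_toReal hct).symm
    have hc0 : 0 ≤ c := ENNReal.toReal_nonneg
    rw [hcc, ENNReal.ofReal_lt_ofReal_iff_of_nonneg hc0] at hc1
    obtain ⟨q, hq1, hq2⟩ := exists_rat_btwn (div_lt_div_of_pos_right hc1 hΔ)
    have hq0 : 0 < q := by
      have : (0 : ℝ) < q := lt_of_le_of_lt (by positivity) hq1
      exact_mod_cast this
    rw [div_lt_iff₀ hΔ] at hq1
    rw [lt_div_iff₀ hΔ] at hq2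
    obtain ⟨v, hv⟩ : ∃ v : ℝ, v = q * Δ := ⟨_, rfl⟩
    rw [← hv] at hq1 hq2
    have hvc : 0 < v - c := by linarith
    obtain ⟨N, hN⟩ := exists_nat_gt (2 * c / (v - c))
    rw [div_lt_iff₀ hvc] at hN
    have hd : (0 : ℝ) < q.den := by exact_mod_cast q.den_pos
    have hN0 : 0 < N := by
      rcases Nat.eq_zero_or_pos N with h | h
      · rw [h] at hN; simp at hN; linarith
      · exact h
    have hN0' : (0 : ℝ) < N := by exact_mod_cast hN0
    have hi : 1 ≤ q.den * N := Nat.mul_pos q.den_pos hN0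
    have hvm : v = ((q.num.toNat * N : ℕ) : ℝ) * Δ / ((q.den * N : ℕ) : ℝ) := by
      have h1 : ((q.num.toNat : ℕ) : ℝ) = (q.num : ℝ) := by
        have : ((q.num.toNat : ℕ) : ℤ) = q.num := Int.toNat_of_nonneg (Rat.num_nonneg.mpr hq0.le)
        exact_mod_cast this
      have h2 : (q : ℝ) = q.num / q.den := Rat.cast_def q
      push_cast
      rw [h1, hv, h2]
      field_simp
    set i := q.den * N with hidef
    have hi' : (0 : ℝ) < i := by exact_mod_cast hi
    have hiN : (N : ℝ) ≤ i := by exact_mod_cast Nat.le_mul_of_pos_left N q.den_pos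
    set lam : ℝ := 1 + 1 / i with hlam
    have hl0 : 0 < lam := by positivity
    obtain ⟨⟨hp, hD⟩, hcost⟩ := scale ε Δ lam hl0 μ hμ
    have hη : 0 < (v - c) / 2 := by linarith
    obtain ⟨g, mg, gt, gd, g1, gc⟩ := exists_profile ε (lam * Δ) ((v - c) / 2) hη _ hp hD
    have hlD : lam * Δ = Δ + Δ / i := by rw [hlam]; ring
    rw [hlD] at gd
    have hci : c / i < (v - c) / 2 := by
      rw [div_lt_iff₀ hi']
      nlinarith
    have gc' : ∫⁻ x, ENNReal.ofReal (l1 x) * g (l1 x) < ENNReal.ofReal v := by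
      refine gc.trans_lt ?_
      rw [hcost, hcc, ← ENNReal.ofReal_mul hl0.le, ← ENNReal.ofReal_add (by positivity) hη.le]
      rw [ENNReal.ofReal_lt_ofReal_iff (by linarith)]
      have : lam * c = c + c / i := by rw [hlam]; ring
      linarith
    obtain ⟨ν, hν, hνc⟩ := main_step ε Δ v hΔ i (q.num.toNat * N) hi hvm g mg gt gd g1 gc'
    have h1 : (⨅ (μ : Measure (ℝ × ℝ)) (_ : ∃ i : ℕ, 1 ≤ i ∧ MemPb ε Δ i μ), cost μ) ≤ cost ν :=
      iInf₂_le ν ⟨i, hi, hν⟩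
    have h2 : ENNReal.ofReal v ≤ ENNReal.ofReal c1 := ENNReal.ofReal_le_ofReal hq2.le
    exact absurd (h1.trans_lt (hνc.trans_le (h2.trans hc1W.le))) (lt_irrefl _)
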